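/- For every m ≥ 1 there exists a constant C > 0 such that for every h ≥ 1 and every context-free grammar in Chomsky normal form with h variables over a terminal alphabet Σ of m letters whose generated language contains no unary word, there exists a deterministic finite automaton over Σ with at most 2^{C·h} states that is Parikh equivalent to the grammar. -/

import Mathlib

/-- A context-free grammar is in Chomsky normal form if every production has one of the
forms `B → CD` (with `C, D` different from the start variable), `B → a`, or `S → ε`. -/
def IsCNF {T : Type*} (G : ContextFreeGrammar T) : Prop :=
  ∀ r ∈ G.rules,
    (∃ a : T, r.output = [Symbol.terminal a]) ∨
    (∃ C D : G.NT, C ≠ G.initial ∧ D ≠ G.initial ∧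
      r.output = [Symbol.nonterminal C, Symbol.nonterminal D]) ∨
    (r.input = G.initial ∧ r.output = [])

/-- The Parikh map `ψ : (Fin m)^* → ℕ^m`, counting for each letter its number of
occurrences in the word. -/
def parikh {m : ℕ} (w : List (Fin m)) : Fin m → ℕ := fun i => w.count i

/-- The Parikh image `ψ(L)` of a language over the alphabet `Fin m`. -/
def parikhImage {m : ℕ} (L : Language (Fin m)) : Set (Fin m → ℕ) :=
  parikh '' L

/-- A word is unary if all of its letters are equal to one single letter
(the empty word is unary). -/
def IsUnaryWord {α : Type*} (w : List α) : Prop :=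
  ∀ c ∈ w, ∀ c' ∈ w, c = c'

set_option linter.unusedSectionVars false

namespace PK

/-- total size of a vector -/
def sz {m : ℕ} (v : Fin m → ℕ) : ℕ := ∑ i, v i

lemma sz_add {m : ℕ} (v w : Fin m → ℕ) : sz (v + w) = sz v + sz w := by
  simp [sz, Finset.sum_add_distrib]

lemma sz_zero {m : ℕ} : sz (0 : Fin m → ℕ) = 0 := by simp [sz]

lemma sz_single {m : ℕ} (a : Fin m) : sz (Pi.single a 1 : Fin m → ℕ) = 1 := by
  simp [sz]

lemma le_sz {m : ℕ} (v : Fin m → ℕ) (i : Fin m) : v i ≤ sz v :=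
  Finset.single_le_sum (f := v) (fun _ _ => Nat.zero_le _) (Finset.mem_univ i)

section Trees
variable {V : Type*} [DecidableEq V] {m : ℕ} (T : V → Fin m → Prop) (R : V → V → V → Prop)

/-- derivation trees: root, set of variables, Parikh vector -/
inductive D : V → Finset V → (Fin m → ℕ) → Prop
  | leaf {A a} : T A a → D A {A} (Pi.single a 1)
  | node {A B C U1 U2 v1 v2} : R A B C → D B U1 v1 → D C U2 v2 →
      D A (insert A (U1 ∪ U2)) (v1 + v2)

/-- trees with one hole: root, hole, variables (not counting the hole), Parikh vector -/
inductive Ctx : V → V → Finset V → (Fin m → ℕ) → Prop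
  | hole {A} : Ctx A A ∅ 0
  | left {A B C X U1 U2 v1 v2} : R A B C → Ctx B X U1 v1 → D T R C U2 v2 →
      Ctx A X (insert A (U1 ∪ U2)) (v1 + v2)
  | right {A B C X U1 U2 v1 v2} : R A B C → D T R B U1 v1 → Ctx C X U2 v2 →
      Ctx A X (insert A (U1 ∪ U2)) (v1 + v2)

/-- trees in which no variable repeats along a path -/
inductive PD : V → Finset V → (Fin m → ℕ) → Prop
  | leaf {A a} : T A a → PD A {A} (Pi.single a 1)
  | node {A B C U1 U2 v1 v2} : R A B C → PD B U1 v1 → PD C U2 v2 → A ∉ U1 ∪ U2 →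
      PD A (insert A (U1 ∪ U2)) (v1 + v2)

/-- spines ending in a small tree containing the marked variables -/
inductive Sp (M : Finset V) (b : ℕ) : V → Finset V → Finset V → (Fin m → ℕ) → Prop
  | base {A U v} : D T R A U v → M ⊆ U → sz v ≤ b → Sp M b A {A} U v
  | left {A B C S U1 U2 v1 v2} : R A B C → Sp M b B S U1 v1 → PD T R C U2 v2 → A ∉ S →
      Sp M b A (insert A S) (insert A (U1 ∪ U2)) (v1 + v2)
  | right {A B C S U1 U2 v1 v2} : R A B C → PD T R B U1 v1 → Sp M b C S U2 v2 → A ∉ S →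
      Sp M b A (insert A S) (insert A (U1 ∪ U2)) (v1 + v2)

/-- small pumps over a set of variables -/
def Pumps (N : ℕ) (U : Finset V) : Set (Fin m → ℕ) :=
  {p | ∃ X ∈ U, ∃ Up ⊆ U, Ctx T R X X Up p ∧ sz p ≤ N}

variable {T R}

lemma Pumps_mono {N : ℕ} {U U' : Finset V} (h : U ⊆ U') :
    Pumps T R N U ⊆ Pumps T R N U' := by
  rintro p ⟨X, hX, Up, hUp, hc, hs⟩
  exact ⟨X, h hX, Up, hUp.trans h, hc, hs⟩

lemma D.root {A : V} {U v} (h : D T R A U v) : A ∈ U := by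
  cases h <;> simp

lemma PD.toD {A : V} {U v} (h : PD T R A U v) : D T R A U v := by
  induction h with
  | leaf h => exact .leaf h
  | node h _ _ _ i1 i2 => exact .node h i1 i2

lemma D.plug {A X : V} {U v} (h : Ctx T R A X U v) {U' v'} (h' : D T R X U' v') :
    D T R A (U ∪ U') (v + v') := by
  induction h with
  | hole => simpa using h'
  | @left A B C X U1 U2 v1 v2 hr _ hd ih =>
    have := D.node hr (ih h') hd
    convert this using 1
    · ext; simp; tauto
    · abel
  | @right A B C X U1 U2 v1 v2 hr hd _ ih =>
    have := D.node hr hd (ih h')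
    convert this using 1
    · ext; simp
    · abel

lemma D.split {A X : V} {U v} (h : D T R A U v) (hX : X ∈ U) :
    ∃ U1 U2 v1 v2, Ctx T R A X U1 v1 ∧ D T R X U2 v2 ∧ U1 ∪ U2 = U ∧ v1 + v2 = v := by
  induction h with
  | leaf h =>
    simp at hX; subst hX
    exact ⟨_, _, _, _, .hole, .leaf h, by simp, by simp⟩
  | @node A B C U1 U2 v1 v2 hr h1 h2 i1 i2 =>
    by_cases hA : X = A
    · subst hA
      exact ⟨_, _, _, _, .hole, .node hr h1 h2, by simp, by simp⟩
    · simp [hA] at hX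
      rcases hX with hX | hX
      · obtain ⟨W1, W2, w1, w2, hc, hd, rfl, rfl⟩ := i1 hX
        refine ⟨_, _, _, _, .left hr hc h2, hd, ?_, ?_⟩
        · ext; simp; tauto
        · abel
      · obtain ⟨W1, W2, w1, w2, hc, hd, rfl, rfl⟩ := i2 hX
        refine ⟨_, _, _, _, .right hr h1 hc, hd, ?_, ?_⟩
        · ext; simp
        · abel

lemma PD.split {A X : V} {U v} (h : PD T R A U v) (hX : X ∈ U) :
    ∃ U1 U2 v1 v2, Ctx T R A X U1 v1 ∧ PD T R X U2 v2 ∧ U1 ∪ U2 ⊆ U ∧ v1 + v2 = v := by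
  induction h with
  | leaf h =>
    simp at hX; subst hX
    exact ⟨_, _, _, _, .hole, .leaf h, by simp, by simp⟩
  | @node A B C U1 U2 v1 v2 hr h1 h2 hA' i1 i2 =>
    by_cases hA : X = A
    · subst hA
      exact ⟨_, _, _, _, .hole, .node hr h1 h2 hA', by simp, by simp⟩
    · simp [hA] at hX
      rcases hX with hX | hX
      · obtain ⟨W1, W2, w1, w2, hc, hd, hs, rfl⟩ := i1 hX
        refine ⟨_, _, _, _, .left hr hc h2.toD, hd, ?_, ?_⟩
        · intro x; have := @hs x; simp at *; tauto
        · abel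
      · obtain ⟨W1, W2, w1, w2, hc, hd, hs, rfl⟩ := i2 hX
        refine ⟨_, _, _, _, .right hr h1.toD hc, hd, ?_, ?_⟩
        · intro x; have := @hs x; simp at *; tauto
        · abel

lemma D.pump {A : V} {U v} (h : D T R A U v) {N : ℕ} {p} (hp : p ∈ Pumps T R N U) :
    D T R A U (v + p) := by
  obtain ⟨X, hX, Up, hUp, hc, -⟩ := hp
  obtain ⟨U1, U2, v1, v2, h1, h2, rfl, rfl⟩ := h.split hX
  have := D.plug h1 (D.plug hc h2)
  convert this using 1
  · ext x; have := @hUp x; simp at *; tauto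
  · abel

lemma D.pumps {A : V} {U v} (h : D T R A U v) {N : ℕ} {q}
    (hq : q ∈ AddSubmonoid.closure (Pumps T R N U)) : D T R A U (v + q) := by
  induction hq using AddSubmonoid.closure_induction generalizing v with
  | mem x hx => exact h.pump hx
  | zero => simpa using h
  | add x y _ _ ix iy => rw [← add_assoc]; exact iy (ix h)

variable [Fintype V]

lemma PD.size' {A : V} {U v} (h : PD T R A U v) : sz v ≤ 2 ^ U.card := by
  induction h with
  | leaf h => rw [sz_single]; exact Nat.one_le_two_pow
  | @node A B C U1 U2 v1 v2 hr h1 h2 hA' i1 i2 =>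
    rw [sz_add, Finset.card_insert_of_notMem hA', pow_succ]
    have a1 : 2 ^ U1.card ≤ 2 ^ (U1 ∪ U2).card :=
      Nat.pow_le_pow_right (by norm_num) (Finset.card_le_card Finset.subset_union_left)
    have a2 : 2 ^ U2.card ≤ 2 ^ (U1 ∪ U2).card :=
      Nat.pow_le_pow_right (by norm_num) (Finset.card_le_card Finset.subset_union_right)
    omega

lemma PD.size {A : V} {U v} (h : PD T R A U v) : sz v ≤ 2 ^ Fintype.card V :=
  h.size'.trans (Nat.pow_le_pow_right (by norm_num) (Finset.card_le_univ _))

lemma D.toPD {N : ℕ} (hN : 2 * 2 ^ Fintype.card V ≤ N) {A : V} {U v} (h : D T R A U v) :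
    ∃ U0 v0 q, PD T R A U0 v0 ∧ U0 ⊆ U ∧ q ∈ AddSubmonoid.closure (Pumps T R N U) ∧
      v = v0 + q := by
  induction h with
  | leaf h => exact ⟨_, _, 0, .leaf h, subset_rfl, zero_mem _, by simp⟩
  | @node A B C U1 U2 v1 v2 hr h1 h2 i1 i2 =>
    obtain ⟨W1, w1, q1, p1, s1, c1, rfl⟩ := i1
    obtain ⟨W2, w2, q2, p2, s2, c2, rfl⟩ := i2
    have hs1 : U1 ⊆ insert A (U1 ∪ U2) := by intro x; simp; tauto
    have hs2 : U2 ⊆ insert A (U1 ∪ U2) := by intro x; simp; tauto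
    have c1' := AddSubmonoid.closure_mono (Pumps_mono hs1) c1
    have c2' := AddSubmonoid.closure_mono (Pumps_mono hs2) c2
    have z1 := p1.size
    have z2 := p2.size
    by_cases hA1 : A ∈ W1
    · obtain ⟨X1, X2, y1, y2, hc, hd, hs, rfl⟩ := p1.split hA1
      rw [sz_add] at z1
      refine ⟨X2, y2, q1 + q2 + (y1 + w2), hd, ?_, add_mem (add_mem c1' c2')
        (AddSubmonoid.subset_closure ⟨A, by simp, _, ?_, .left hr hc p2.toD, ?_⟩), by abel⟩
      · exact (Finset.subset_union_right.trans hs).trans (s1.trans hs1)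
      · intro x; have := @hs x; have := @s1 x; have := @s2 x; simp at *; tauto
      · rw [sz_add]; omega
    by_cases hA2 : A ∈ W2
    · obtain ⟨X1, X2, y1, y2, hc, hd, hs, rfl⟩ := p2.split hA2
      rw [sz_add] at z2
      refine ⟨X2, y2, q1 + q2 + (w1 + y1), hd, ?_, add_mem (add_mem c1' c2')
        (AddSubmonoid.subset_closure ⟨A, by simp, _, ?_, .right hr p1.toD hc, ?_⟩), by abel⟩
      · exact (Finset.subset_union_right.trans hs).trans (s2.trans hs2)
      · intro x; have := @hs x; have := @s1 x; have := @s2 x; simp at *; tauto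
      · rw [sz_add]; omega
    · refine ⟨_, _, q1 + q2, .node hr p1 p2 (by simp; tauto), ?_, add_mem c1' c2', by abel⟩
      intro x; have := @s1 x; have := @s2 x; simp at *; tauto

lemma Sp.toD {M : Finset V} {b : ℕ} {A : V} {S U v} (h : Sp T R M b A S U v) :
    D T R A U v := by
  induction h with
  | base h => exact h
  | left hr _ hp _ ih => exact .node hr ih hp.toD
  | right hr hp _ _ ih => exact .node hr hp.toD ih

lemma Sp.sub {M : Finset V} {b : ℕ} {A : V} {S U v} (h : Sp T R M b A S U v) : M ⊆ U := by
  induction h with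
  | base _ h => exact h
  | left hr _ hp _ ih => intro x hx; have := ih hx; simp; tauto
  | right hr hp _ _ ih => intro x hx; have := ih hx; simp; tauto

lemma Sp.size {M : Finset V} {b : ℕ} {A : V} {S U v} (h : Sp T R M b A S U v) :
    sz v ≤ b + S.card * 2 ^ Fintype.card V := by
  induction h with
  | base _ _ h => omega
  | left hr _ hp hA ih =>
    rw [sz_add, Finset.card_insert_of_notMem hA, Nat.succ_mul]; have := hp.size; omega
  | right hr hp _ hA ih =>
    rw [sz_add, Finset.card_insert_of_notMem hA, Nat.succ_mul]; have := hp.size; omega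

lemma Sp.cut {M : Finset V} {b : ℕ} {A X : V} {S U v} (h : Sp T R M b A S U v)
    (hX : X ∈ S) : ∃ U1 U2 v1 v2 S2, Ctx T R A X U1 v1 ∧ Sp T R M b X S2 U2 v2 ∧
      U1 ∪ U2 = U ∧ v1 + v2 = v ∧ sz v1 ≤ S.card * 2 ^ Fintype.card V := by
  induction h with
  | base h1 h2 h3 =>
    simp at hX; subst hX
    exact ⟨_, _, _, _, _, .hole, .base h1 h2 h3, by simp, by simp, by simp [sz_zero]⟩
  | @left A B C S U1 U2 v1 v2 hr hs hp hA ih =>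
    by_cases hXA : X = A
    · subst hXA
      exact ⟨_, _, _, _, _, .hole, .left hr hs hp hA, by simp, by simp, by simp [sz_zero]⟩
    · simp [hXA] at hX
      obtain ⟨W1, W2, w1, w2, S2, hc, hd, rfl, rfl, hz⟩ := ih hX
      refine ⟨_, _, _, _, _, .left hr hc hp.toD, hd, ?_, ?_, ?_⟩
      · ext; simp; tauto
      · abel
      · rw [sz_add, Finset.card_insert_of_notMem hA, Nat.succ_mul]; have := hp.size; omega
  | @right A B C S U1 U2 v1 v2 hr hp hs hA ih =>
    by_cases hXA : X = A
    · subst hXA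
      exact ⟨_, _, _, _, _, .hole, .right hr hp hs hA, by simp, by simp, by simp [sz_zero]⟩
    · simp [hXA] at hX
      obtain ⟨W1, W2, w1, w2, S2, hc, hd, rfl, rfl, hz⟩ := ih hX
      refine ⟨_, _, _, _, _, .right hr hp.toD hc, hd, ?_, ?_, ?_⟩
      · ext; simp
      · abel
      · rw [sz_add, Finset.card_insert_of_notMem hA, Nat.succ_mul]; have := hp.size; omega

/-- the bound on the size of reduced trees with `k` marks -/
def gb (c k : ℕ) : ℕ := if k = 0 then c else (4 * k - 1) * c

lemma D.weak {N c : ℕ} (hN : 2 * 2 ^ Fintype.card V ≤ N)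
    (hc : (Fintype.card V + 1) * 2 ^ Fintype.card V = c)
    {A : V} {U v} (h : D T R A U v)
    (ih : ∀ M ⊆ U, M.Nonempty → ∃ S U0 v0 q, Sp T R M ((4 * M.card - 2) * c) A S U0 v0 ∧
      U0 ⊆ U ∧ q ∈ AddSubmonoid.closure (Pumps T R N U) ∧ v = v0 + q)
    (M : Finset V) (hM : M ⊆ U) : ∃ U0 v0 q, D T R A U0 v0 ∧ M ⊆ U0 ∧ U0 ⊆ U ∧
      sz v0 ≤ gb c M.card ∧ q ∈ AddSubmonoid.closure (Pumps T R N U) ∧ v = v0 + q := by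
  rcases M.eq_empty_or_nonempty with rfl | hne
  · obtain ⟨U0, v0, q, hp, hs, hq, rfl⟩ := h.toPD hN
    refine ⟨U0, v0, q, hp.toD, by simp, hs, ?_, hq, rfl⟩
    have := hp.size
    simp only [gb, Finset.card_empty, if_true]
    rw [← hc, Nat.succ_mul]; omega
  · obtain ⟨S, U0, v0, q, hsp, hs, hq, rfl⟩ := ih M hM hne
    refine ⟨U0, v0, q, hsp.toD, hsp.sub, hs, ?_, hq, rfl⟩
    have h1 := hsp.size
    have h2 : S.card * 2 ^ Fintype.card V ≤ c := by
      rw [← hc]; exact Nat.mul_le_mul_right _ ((Finset.card_le_univ _).trans (Nat.le_succ _))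
    have h3 := hne.card_pos
    simp only [gb]
    rw [if_neg (by omega)]
    obtain ⟨k, hk⟩ : ∃ k, M.card = k + 1 := ⟨M.card - 1, by omega⟩
    rw [hk] at h1 ⊢
    have e1 : 4 * (k + 1) - 2 = 4 * k + 2 := by omega
    have e2 : 4 * (k + 1) - 1 = 4 * k + 2 + 1 := by omega
    rw [e1] at h1; rw [e2, Nat.succ_mul]; omega

lemma gb_add1 (c k1 k2 k : ℕ) (h : k1 + k2 + 1 = k) :
    gb c k1 + gb c k2 ≤ (4 * k - 2) * c := by
  unfold gb
  split_ifs with h1 h2 h2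
  · have : (2 : ℕ) ≤ 4 * k - 2 := by omega
    nlinarith
  · have : 1 + (4 * k2 - 1) ≤ 4 * k - 2 := by omega
    nlinarith
  · have : 1 + (4 * k1 - 1) ≤ 4 * k - 2 := by omega
    nlinarith
  · have : (4 * k1 - 1) + (4 * k2 - 1) ≤ 4 * k - 2 := by omega
    nlinarith

lemma gb_add2 (c k1 k2 k : ℕ) (h : k1 + k2 = k) (h1 : 0 < k1) (h2 : 0 < k2) :
    gb c k1 + gb c k2 ≤ (4 * k - 2) * c := by
  unfold gb
  rw [if_neg (by omega), if_neg (by omega)]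
  have : (4 * k1 - 1) + (4 * k2 - 1) ≤ 4 * k - 2 := by omega
  nlinarith

lemma D.main {N c : ℕ} (hN : 2 * 2 ^ Fintype.card V ≤ N)
    (hc : (Fintype.card V + 1) * 2 ^ Fintype.card V = c) (hcN : c ≤ N)
    {A : V} {U v} (h : D T R A U v) :
    ∀ M ⊆ U, M.Nonempty → ∃ S U0 v0 q, Sp T R M ((4 * M.card - 2) * c) A S U0 v0 ∧
      U0 ⊆ U ∧ q ∈ AddSubmonoid.closure (Pumps T R N U) ∧ v = v0 + q := by
  have hcpos : 0 < c := by rw [← hc]; positivity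
  induction h with
  | leaf h =>
    intro M hM hne
    refine ⟨_, _, _, 0, .base (.leaf h) hM ?_, subset_rfl, zero_mem _, by simp⟩
    rw [sz_single]
    have := hne.card_pos
    exact Nat.mul_pos (by omega) hcpos
  | @node A B C U1 U2 v1 v2 hr h1 h2 i1 i2 =>
    intro M hM hne
    have hs1 : U1 ⊆ insert A (U1 ∪ U2) := by intro x; simp; tauto
    have hs2 : U2 ⊆ insert A (U1 ∪ U2) := by intro x; simp; tauto
    have m1 := AddSubmonoid.closure_mono (Pumps_mono (T := T) (R := R) (N := N) hs1)
    have m2 := AddSubmonoid.closure_mono (Pumps_mono (T := T) (R := R) (N := N) hs2)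
    set M1 := M.erase A ∩ U1 with hM1
    set M2 := M.erase A \ U1 with hM2
    have hM1U : M1 ⊆ U1 := Finset.inter_subset_right
    have hM2U : M2 ⊆ U2 := by
      intro x hx
      simp [hM2] at hx
      have := hM hx.1.2
      simp [hx] at this
      exact this
    have hcard : M1.card + M2.card = (M.erase A).card := Finset.card_inter_add_card_sdiff _ _
    have hMsub : M ⊆ insert A (M1 ∪ M2) := by
      intro x hx
      by_cases hxA : x = A <;> by_cases hx1 : x ∈ U1 <;> simp [hM1, hM2, hxA, hx, hx1]
    have branch : gb c M1.card + gb c M2.card ≤ (4 * M.card - 2) * c →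
        ∃ S U0 v0 q, Sp T R M ((4 * M.card - 2) * c) A S U0 v0 ∧
      U0 ⊆ insert A (U1 ∪ U2) ∧ q ∈ AddSubmonoid.closure (Pumps T R N (insert A (U1 ∪ U2))) ∧
        v1 + v2 = v0 + q := by
      intro hb
      obtain ⟨W1, w1, q1, d1, a1, s1, z1, c1, rfl⟩ := D.weak hN hc h1 i1 M1 hM1U
      obtain ⟨W2, w2, q2, d2, a2, s2, z2, c2, rfl⟩ := D.weak hN hc h2 i2 M2 hM2U
      refine ⟨_, _, _, q1 + q2, .base (.node hr d1 d2) ?_ ?_, ?_, add_mem (m1 c1) (m2 c2),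
        by abel⟩
      · exact hMsub.trans (Finset.insert_subset_insert _ (Finset.union_subset_union a1 a2))
      · rw [sz_add]; omega
      · exact Finset.insert_subset_insert _ (Finset.union_subset_union s1 s2)
    have hScard : ∀ S : Finset V, S.card * 2 ^ Fintype.card V + 2 ^ Fintype.card V ≤ c := by
      intro S
      rw [← hc, Nat.succ_mul]
      exact Nat.add_le_add_right (Nat.mul_le_mul_right _ (Finset.card_le_univ _)) _
    by_cases hA : A ∈ M
    · apply branch
      apply gb_add1
      rw [hcard]; exact Finset.card_erase_add_one hA
    rw [Finset.erase_eq_of_notMem hA] at hcard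
    rcases M1.eq_empty_or_nonempty with e1 | n1
    · have hM2e : M ⊆ U2 := by
        intro x hx
        have := hMsub hx
        rw [e1] at this
        simp at this
        rcases this with rfl | this
        · exact absurd hx hA
        · exact hM2U this
      obtain ⟨S, W2, w2, q2, d2, s2, c2, rfl⟩ := i2 M hM2e hne
      obtain ⟨W1, w1, q1, p1, s1, c1, rfl⟩ := h1.toPD hN
      by_cases hAS : A ∈ S
      · obtain ⟨X1, X2, y1, y2, S2, hcx, hsp, rfl, rfl, hz⟩ := d2.cut hAS
        refine ⟨S2, X2, y2, q1 + q2 + (w1 + y1), hsp, ?_, add_mem (add_mem (m1 c1) (m2 c2))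
          (AddSubmonoid.subset_closure ⟨A, by simp, _, ?_, .right hr p1.toD hcx, ?_⟩), by abel⟩
        · exact (Finset.subset_union_right.trans s2).trans hs2
        · exact Finset.insert_subset_insert _ (Finset.union_subset_union s1
            (Finset.subset_union_left.trans s2))
        · rw [sz_add]; have := p1.size; have := hScard S; omega
      · refine ⟨_, _, _, q1 + q2, .right hr p1 d2 hAS, ?_, add_mem (m1 c1) (m2 c2), by abel⟩
        exact Finset.insert_subset_insert _ (Finset.union_subset_union s1 s2)
    rcases M2.eq_empty_or_nonempty with e2 | n2
    · have hM1e : M ⊆ U1 := by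
        intro x hx
        have := hMsub hx
        rw [e2] at this
        simp at this
        rcases this with rfl | this
        · exact absurd hx hA
        · exact hM1U this
      obtain ⟨S, W1, w1, q1, d1, s1, c1, rfl⟩ := i1 M hM1e hne
      obtain ⟨W2, w2, q2, p2, s2, c2, rfl⟩ := h2.toPD hN
      by_cases hAS : A ∈ S
      · obtain ⟨X1, X2, y1, y2, S2, hcx, hsp, rfl, rfl, hz⟩ := d1.cut hAS
        refine ⟨S2, X2, y2, q1 + q2 + (y1 + w2), hsp, ?_, add_mem (add_mem (m1 c1) (m2 c2))
          (AddSubmonoid.subset_closure ⟨A, by simp, _, ?_, .left hr hcx p2.toD, ?_⟩), by abel⟩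
        · exact (Finset.subset_union_right.trans s1).trans hs1
        · exact Finset.insert_subset_insert _ (Finset.union_subset_union
            (Finset.subset_union_left.trans s1) s2)
        · rw [sz_add]; have := p2.size; have := hScard S; omega
      · refine ⟨_, _, _, q1 + q2, .left hr d1 p2 hAS, ?_, add_mem (m1 c1) (m2 c2), by abel⟩
        exact Finset.insert_subset_insert _ (Finset.union_subset_union s1 s2)
    · exact branch (gb_add2 _ _ _ _ hcard n1.card_pos n2.card_pos)

lemma D.final {N c : ℕ} (hN : 2 * 2 ^ Fintype.card V ≤ N)
    (hc : (Fintype.card V + 1) * 2 ^ Fintype.card V = c)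
    (hcN : 4 * (Fintype.card V) * c ≤ N)
    {A : V} {U v} (h : D T R A U v) :
    ∃ v0 q, D T R A U v0 ∧ sz v0 ≤ N ∧ q ∈ AddSubmonoid.closure (Pumps T R N U) ∧
      v = v0 + q := by
  have hV : 0 < Fintype.card V := Fintype.card_pos_iff.mpr ⟨A⟩
  have hcN' : c ≤ N := by nlinarith
  obtain ⟨U0, v0, q, hd, h1, h2, hz, hq, rfl⟩ :=
    D.weak hN hc h (D.main hN hc hcN' h) U subset_rfl
  obtain rfl := Finset.Subset.antisymm h1 h2
  refine ⟨v0, q, hd, hz.trans (le_trans ?_ hcN), hq, rfl⟩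
  have hpos : 0 < U.card := Finset.card_pos.mpr ⟨A, h.root⟩
  have hle : U.card ≤ Fintype.card V := Finset.card_le_univ _
  unfold gb
  rw [if_neg (by omega)]
  exact Nat.mul_le_mul_right _ (by omega)

end Trees

end PK
namespace PK

lemma relation {ι : Type*} [Fintype ι] [DecidableEq ι] {m N : ℕ} (p : ι → Fin m → ℕ)
    (hp : ∀ i a, p i a ≤ N) (s : Finset ι) (t : Finset (Fin m))
    (hs : ∀ i ∈ s, ∀ a ∉ t, p i a = 0) (hcard : t.card < s.card) :
    ∃ x y : ι → ℕ, x ≠ y ∧ (∀ i, x i ≤ ((m + 1) * N + 1) ^ m) ∧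
      (∀ i, y i ≤ ((m + 1) * N + 1) ^ m) ∧
      (∀ i ∉ s, x i = 0 ∧ y i = 0) ∧ ∑ i, x i • p i = ∑ i, y i • p i := by
  obtain ⟨s', hs', hc'⟩ := Finset.exists_subset_card_eq (show t.card + 1 ≤ s.card by omega)
  set D := ((m + 1) * N + 1) ^ m with hD
  have htm : t.card ≤ m := by simpa using Finset.card_le_univ t
  let ext : (s' → Fin (D + 1)) → ι → ℕ := fun f i => if h : i ∈ s' then (f ⟨i, h⟩ : ℕ) else 0
  have ext_le : ∀ f i, ext f i ≤ D := by
    intro f i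
    simp only [ext]
    split_ifs with h
    · exact Nat.le_of_lt_succ (f ⟨i, h⟩).2
    · exact Nat.zero_le _
  have ext_out : ∀ f, ∀ i ∉ s', ext f i = 0 := by
    intro f i hi; simp [ext, hi]
  have sum_eq : ∀ f a, ∑ i, ext f i * p i a = ∑ i ∈ s', ext f i * p i a := by
    intro f a
    symm
    apply Finset.sum_subset (Finset.subset_univ _)
    intro i _ hi; simp [ext_out f i hi]
  have bound : ∀ f a, ∑ i, ext f i * p i a < (m + 1) * D * N + 1 := by
    intro f a
    rw [sum_eq, Nat.lt_succ_iff]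
    calc ∑ i ∈ s', ext f i * p i a ≤ ∑ i ∈ s', D * N :=
          Finset.sum_le_sum (fun i _ => Nat.mul_le_mul (ext_le f i) (hp i a))
      _ = s'.card * (D * N) := by simp
      _ ≤ (m + 1) * (D * N) := Nat.mul_le_mul_right _ (by omega)
      _ = _ := by ring
  let F : (s' → Fin (D + 1)) → (t → Fin ((m + 1) * D * N + 1)) :=
    fun f a => ⟨∑ i, ext f i * p i a, bound f a⟩
  have hlt : Fintype.card (t → Fin ((m + 1) * D * N + 1)) < Fintype.card (s' → Fin (D + 1)) := by
    simp only [Fintype.card_fun, Fintype.card_fin, Fintype.card_coe, hc']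
    calc ((m + 1) * D * N + 1) ^ t.card ≤ (((m + 1) * N + 1) * (D + 1)) ^ t.card :=
          Nat.pow_le_pow_left (by nlinarith [Nat.zero_le ((m+1)*N)]) _
      _ = ((m + 1) * N + 1) ^ t.card * (D + 1) ^ t.card := mul_pow _ _ _
      _ ≤ D * (D + 1) ^ t.card :=
          Nat.mul_le_mul_right _ (Nat.pow_le_pow_right (by omega) htm)
      _ < (D + 1) * (D + 1) ^ t.card :=
          Nat.mul_lt_mul_of_pos_right (Nat.lt_succ_self _) (by positivity)
      _ = (D + 1) ^ (t.card + 1) := by ring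
  obtain ⟨f, g, hne, hfg⟩ := Fintype.exists_ne_map_eq_of_card_lt F hlt
  refine ⟨ext f, ext g, ?_, ext_le f, ext_le g, ?_, ?_⟩
  · intro h
    apply hne
    funext i
    have := congrFun h i.1
    simp only [ext, i.2, dif_pos] at this
    exact Fin.ext this
  · intro i hi
    exact ⟨ext_out f i (fun h => hi (hs' h)), ext_out g i (fun h => hi (hs' h))⟩
  · funext a
    simp only [Finset.sum_apply, Pi.smul_apply, smul_eq_mul]
    by_cases ha : a ∈ t
    · have := congrFun hfg ⟨a, ha⟩
      simpa [F] using this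
    · rw [sum_eq, sum_eq, Finset.sum_eq_zero, Finset.sum_eq_zero]
      · intro i hi; rw [hs i (hs' hi) a ha, mul_zero]
      · intro i hi; rw [hs i (hs' hi) a ha, mul_zero]

lemma hall_rep {ι : Type*} [Fintype ι] {m N : ℕ} (p : ι → Fin m → ℕ)
    (hp : ∀ i a, p i a ≤ N) (n : ι → ℕ) :
    ∃ n' : ι → ℕ, ∑ i, n' i • p i = ∑ i, n i • p i ∧
      ∃ σ : {i // ((m + 1) * N + 1) ^ m ≤ n' i} → Fin m, Function.Injective σ ∧
        ∀ i, 0 < p i.1 (σ i) := by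
  classical
  let _ : LinearOrder ι := LinearOrder.lift' (Fintype.equivFin ι) (Fintype.equivFin ι).injective
  set D := ((m + 1) * N + 1) ^ m with hD
  let St : Set (Lex (ι → ℕ)) := {k | ∑ i, (ofLex k) i • p i = ∑ i, n i • p i}
  have hne : St.Nonempty := ⟨toLex n, rfl⟩
  have wf : WellFounded ((· < ·) : Lex (ι → ℕ) → Lex (ι → ℕ) → Prop) := wellFounded_lt
  set k := wf.min St hne with hk
  have hkS : k ∈ St := wf.min_mem St hne
  have hmin : ∀ k' ∈ St, ¬ k' < k := fun k' h => wf.not_lt_min St h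
  refine ⟨ofLex k, hkS, ?_⟩
  let tt : {i // D ≤ ofLex k i} → Finset (Fin m) := fun i => Finset.univ.filter (0 < p i.1 ·)
  have key : ∃ f : {i // D ≤ ofLex k i} → Fin m, Function.Injective f ∧ ∀ x, f x ∈ tt x := by
    rw [← Finset.all_card_le_biUnion_card_iff_exists_injective]
    intro s
    by_contra hlt
    push Not at hlt
    obtain ⟨x, y, hxy, hx, hy, hout, hsum⟩ := relation p hp (s.map (Function.Embedding.subtype _))
      (s.biUnion tt) (by
        intro i hi a ha
        simp only [Finset.mem_map, Function.Embedding.subtype_apply] at hi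
        obtain ⟨j, hj, rfl⟩ := hi
        by_contra h0
        apply ha
        rw [Finset.mem_biUnion]
        exact ⟨j, hj, by simp [tt]; omega⟩) (by rw [Finset.card_map]; exact hlt)
    have hbig : ∀ i ∈ s.map (Function.Embedding.subtype _), D ≤ ofLex k i := by
      intro i hi
      simp only [Finset.mem_map, Function.Embedding.subtype_apply] at hi
      obtain ⟨j, hj, rfl⟩ := hi
      exact j.2
    -- exchange step
    have step : ∀ x y : ι → ℕ, (∀ i, y i ≤ D) →
        (∀ i ∉ s.map (Function.Embedding.subtype _), x i = 0 ∧ y i = 0) →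
        ∑ i, x i • p i = ∑ i, y i • p i → ¬ toLex x < toLex y := by
      intro x y hy hout hsum hlt
      have hle : ∀ i, y i ≤ ofLex k i := by
        intro i
        by_cases hi : i ∈ s.map (Function.Embedding.subtype _)
        · exact (hy i).trans (hbig i hi)
        · rw [(hout i hi).2]; exact Nat.zero_le _
      apply hmin (toLex (fun i => ofLex k i - y i + x i))
      · change ∑ i, (ofLex k i - y i + x i) • p i = _
        rw [← hkS]
        have e : ∑ i, (ofLex k) i • p i = ∑ i, (ofLex k i - y i) • p i + ∑ i, y i • p i := by
          rw [← Finset.sum_add_distrib]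
          refine Finset.sum_congr rfl (fun i _ => ?_)
          rw [← add_smul, Nat.sub_add_cancel (hle i)]
        rw [e, ← hsum, ← Finset.sum_add_distrib]
        exact Finset.sum_congr rfl (fun i _ => add_smul _ _ _)
      · obtain ⟨i, h1, h2⟩ := hlt
        refine ⟨i, fun j hj => ?_, ?_⟩
        · have := h1 j hj
          have h3 := hle j
          change ofLex k j - y j + x j = ofLex k j
          change x j = y j at this
          omega
        · have h3 := hle i
          change ofLex k i - y i + x i < ofLex k i
          change x i < y i at h2
          omega
    rcases lt_trichotomy (toLex x) (toLex y) with h | h | h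
    · exact step x y hy hout hsum h
    · exact hxy (toLex.injective h)
    · exact step y x hx (fun i hi => (hout i hi).symm) hsum.symm h
  obtain ⟨f, hf, hft⟩ := key
  exact ⟨f, hf, fun i => by simpa [tt] using hft i⟩

/-- `Z` is a union of simple linear sets bounded by `N` -/
def Good {m : ℕ} (Z : Set (Fin m → ℕ)) (N : ℕ) : Prop :=
  ∀ z ∈ Z, ∃ (o : Fin m → ℕ) (Q : Fin m → Fin m → ℕ) (k : Fin m → ℕ),
    (∀ a, o a ≤ N) ∧ (∀ a b, Q a b ≤ N) ∧ (∀ a, Q a = 0 ∨ 0 < Q a a) ∧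
    z = o + ∑ a, k a • Q a ∧ ∀ k' : Fin m → ℕ, o + ∑ a, k' a • Q a ∈ Z

/-- the bound for the offsets -/
def NB (m N : ℕ) : ℕ := N + (N + 1) ^ m * (((m + 1) * N + 1) ^ m * N)

lemma mem_closure_rep {m N : ℕ} (P : Set (Fin m → ℕ)) (hP : ∀ p ∈ P, ∀ a, p a ≤ N)
    {q : Fin m → ℕ} (hq : q ∈ AddSubmonoid.closure P) :
    ∃ n : {f : Fin m → Fin (N + 1) // (fun a => (f a : ℕ)) ∈ P} → ℕ,
      haveI := Fintype.ofFinite {f : Fin m → Fin (N + 1) // (fun a => (f a : ℕ)) ∈ P}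
      q = ∑ i, n i • (fun a => (i.1 a : ℕ)) := by
  classical
  let _ := Fintype.ofFinite {f : Fin m → Fin (N + 1) // (fun a => (f a : ℕ)) ∈ P}
  induction hq using AddSubmonoid.closure_induction with
  | mem x hx =>
    refine ⟨Pi.single ⟨fun a => ⟨x a, Nat.lt_succ_of_le (hP x hx a)⟩, hx⟩ 1, ?_⟩
    rw [Finset.sum_eq_single ⟨fun a => ⟨x a, Nat.lt_succ_of_le (hP x hx a)⟩, hx⟩]
    · simp
    · intro b _ hb; rw [Pi.single_eq_of_ne hb, zero_smul]
    · intro h; exact absurd (Finset.mem_univ _) h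
  | zero => exact ⟨0, by simp⟩
  | add x y _ _ ix iy =>
    obtain ⟨n1, rfl⟩ := ix
    obtain ⟨n2, rfl⟩ := iy
    exact ⟨n1 + n2, by simp [add_smul, Finset.sum_add_distrib]⟩

lemma good_of_closure {m N : ℕ} (Z : Set (Fin m → ℕ))
    (h : ∀ z ∈ Z, ∃ (v0 q : Fin m → ℕ) (P : Set (Fin m → ℕ)), (∀ a, v0 a ≤ N) ∧
      (∀ p ∈ P, ∀ a, p a ≤ N) ∧ q ∈ AddSubmonoid.closure P ∧ z = v0 + q ∧
      ∀ q' ∈ AddSubmonoid.closure P, v0 + q' ∈ Z) : Good Z (NB m N) := by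
  classical
  intro z hz
  obtain ⟨v0, q, P, hv0, hP, hq, rfl, hcl⟩ := h z hz
  obtain ⟨n, hn⟩ := mem_closure_rep P hP hq
  let _ := Fintype.ofFinite {f : Fin m → Fin (N + 1) // (fun a => (f a : ℕ)) ∈ P}
  let ι := {f : Fin m → Fin (N + 1) // (fun a => (f a : ℕ)) ∈ P}
  let p : ι → Fin m → ℕ := fun i a => (i.1 a : ℕ)
  have hpN : ∀ i a, p i a ≤ N := fun i a => Nat.le_of_lt_succ (i.1 a).2
  have hpcl : ∀ i, p i ∈ AddSubmonoid.closure P := fun i => AddSubmonoid.subset_closure i.2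
  obtain ⟨D, hD⟩ : ∃ D, D = ((m + 1) * N + 1) ^ m := ⟨_, rfl⟩
  have H := hall_rep p hpN n
  rw [← hD] at H
  obtain ⟨n', hsum, σ, hσ, hpos⟩ := H
  have hq' : q = ∑ i, n' i • p i := by rw [hsum]; exact hn
  let small : Finset ι := Finset.univ.filter (fun i => ¬ D ≤ n' i)
  let Q : Fin m → Fin m → ℕ := fun a => if h : ∃ i, σ i = a then p h.choose.1 else 0
  let k : Fin m → ℕ := fun a => if h : ∃ i, σ i = a then n' h.choose.1 else 0
  have hch : ∀ (i) (h : ∃ j, σ j = σ i), h.choose = i := fun i h => hσ h.choose_spec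
  have hsmallmem : ∑ i ∈ small, n' i • p i ∈ AddSubmonoid.closure P :=
    sum_mem (fun i _ => nsmul_mem (hpcl i) _)
  have hQmem : ∀ a, Q a ∈ AddSubmonoid.closure P := by
    intro a
    simp only [Q]
    split_ifs with h
    · exact hpcl _
    · exact zero_mem _
  have hbigsum : ∑ i ∈ Finset.univ.filter (fun i => D ≤ n' i), n' i • p i
      = ∑ a, k a • Q a := by
    rw [Finset.sum_subtype (p := fun i => D ≤ n' i) _ (by simp)]
    rw [← Finset.sum_subset (Finset.subset_univ (Finset.univ.map ⟨σ, hσ⟩))]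
    · rw [Finset.sum_map]
      refine Finset.sum_congr rfl (fun i _ => ?_)
      have h : ∃ j, σ j = σ i := ⟨i, rfl⟩
      simp only [Function.Embedding.coeFn_mk, Q, k]
      rw [dif_pos h, dif_pos h, hch i h]
    · intro a _ ha
      have : ¬ ∃ i, σ i = a := by simpa using ha
      simp only [k]
      rw [dif_neg this, zero_smul]
  refine ⟨v0 + ∑ i ∈ small, n' i • p i, Q, k, ?_, ?_, ?_, ?_, ?_⟩
  · intro a
    rw [Pi.add_apply, NB, ← hD]
    refine Nat.add_le_add (hv0 a) ?_
    rw [Finset.sum_apply]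
    calc ∑ i ∈ small, (n' i • p i) a ≤ ∑ i ∈ small, D * N := by
          refine Finset.sum_le_sum (fun i hi => ?_)
          simp only [Pi.smul_apply, smul_eq_mul]
          have : n' i < D := by simpa [small] using hi
          exact Nat.mul_le_mul this.le (hpN i a)
      _ = small.card * (D * N) := by simp
      _ ≤ (N + 1) ^ m * (D * N) := by
          refine Nat.mul_le_mul_right _ ((Finset.card_le_univ _).trans ?_)
          have := Fintype.card_subtype_le (fun f : Fin m → Fin (N + 1) => (fun a => (f a : ℕ)) ∈ P)
          simp only [Fintype.card_fun, Fintype.card_fin] at this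
          convert this
  · intro a b
    have : Q a b ≤ N := by
      simp only [Q]
      split_ifs with h
      · exact hpN _ _
      · exact Nat.zero_le _
    exact this.trans (Nat.le_add_right _ _)
  · intro a
    by_cases h : ∃ i, σ i = a
    · right
      obtain ⟨i, rfl⟩ := h
      have h : ∃ j, σ j = σ i := ⟨i, rfl⟩
      simp only [Q]
      rw [dif_pos h, hch i h]
      exact hpos i
    · left; simp only [Q]; rw [dif_neg h]
  · rw [hq', ← hbigsum, add_assoc, add_comm (∑ i ∈ small, _)]
    congr 1
    exact (Finset.sum_filter_add_sum_filter_not _ _ _).symm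
  · intro k'
    rw [add_assoc]
    exact hcl _ (add_mem hsmallmem (sum_mem (fun a _ => nsmul_mem (hQmem a) _)))

end PK
namespace PK

section Auto
variable {m : ℕ}

lemma parikh_nil : parikh ([] : List (Fin m)) = 0 := by
  funext i; simp [parikh]

lemma parikh_cons (a : Fin m) (w : List (Fin m)) :
    parikh (a :: w) = Pi.single a 1 + parikh w := by
  funext i
  by_cases h : a = i
  · subst h; simp [parikh, add_comm]
  · simp [parikh, h]

lemma parikh_append (u w : List (Fin m)) : parikh (u ++ w) = parikh u + parikh w := by
  funext i; simp [parikh]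

lemma parikh_replicate (n : ℕ) (a : Fin m) :
    parikh (List.replicate n a) = n • Pi.single a 1 := by
  induction n with
  | zero => simp [parikh_nil]
  | succ n ih => rw [List.replicate_succ, parikh_cons, ih, succ_nsmul']

lemma parikh_surj (v : Fin m → ℕ) : ∃ w : List (Fin m), parikh w = v := by
  refine ⟨(List.finRange m).flatMap (fun a => List.replicate (v a) a), ?_⟩
  have : ∀ l : List (Fin m), parikh (l.flatMap (fun a => List.replicate (v a) a))
      = (l.map (fun a => v a • (Pi.single a 1 : Fin m → ℕ))).sum := by
    intro l
    induction l with
    | nil => simp [parikh_nil]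
    | cons a l ih => simp [parikh_append, parikh_replicate, ih]
  rw [this]
  funext i
  rw [← List.ofFn_eq_map, List.sum_ofFn, Finset.sum_apply, Finset.sum_eq_single i]
  · simp
  · intro b _ hb; simp [Pi.single_eq_of_ne (Ne.symm hb)]
  · simp

/-- saturation -/
def sat (B : ℕ) (v : Fin m → ℕ) : Fin m → Fin (B + 2) :=
  fun i => ⟨min (v i) (B + 1), by omega⟩

/-- forget the bound -/
def unb {B : ℕ} (v : Fin m → Fin B) : Fin m → ℕ := fun i => (v i : ℕ)

lemma sat_step (B : ℕ) (v w : Fin m → ℕ) : sat B (unb (sat B v) + w) = sat B (v + w) := by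
  funext i
  apply Fin.ext
  simp only [sat, unb, Pi.add_apply]
  omega

lemma sat_eq_iff {B : ℕ} {v t : Fin m → ℕ} (ht : ∀ i, t i ≤ B) :
    unb (sat B v) = t ↔ v = t := by
  constructor
  · intro h
    funext i
    have := congrFun h i
    have := ht i
    simp only [unb, sat] at *
    omega
  · rintro rfl
    funext i
    have := ht i
    simp only [unb, sat]
    omega

variable (m) in
/-- indices of the branches -/
abbrev Idx (N : ℕ) := (Fin m → Fin (N + 1)) × (Fin m → Fin m → Fin (N + 1)) × Fin m

variable (N : ℕ)

/-- number of branches -/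
def K0 (m N : ℕ) : ℕ := (N + 1) ^ m * (((N + 1) ^ m) ^ m * m)

lemma card_Idx : Fintype.card (Idx m N) = K0 m N := by
  simp [K0, Idx]

/-- run length that identifies a branch -/
noncomputable def code (I : Idx m N) : ℕ := (Fintype.equivFin (Idx m N) I : ℕ) + 2

lemma code_lt (I : Idx m N) : code N I < K0 m N + 2 := by
  have := (Fintype.equivFin (Idx m N) I).2
  have h2 := card_Idx (m := m) N
  simp only [code]; omega

lemma code_inj {I J : Idx m N} (h : code N I = code N J) : I = J := by
  apply (Fintype.equivFin (Idx m N)).injective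
  apply Fin.ext
  simp only [code] at h; omega

lemma two_le_code (I : Idx m N) : 2 ≤ code N I := by simp [code]

/-- the starting vector of a branch -/
def qq (I : Idx m N) : Fin m → ℕ := unb I.1 + (K0 m N + 2) • unb (I.2.1 I.2.2)

/-- current target -/
def target (I : Idx m N) : Option (Fin m) → Fin m → ℕ
  | none => qq N I
  | some c => unb (I.2.1 c)

/-- bound on the counters -/
def BB (m N : ℕ) : ℕ := N + m * ((K0 m N + 2) * N)

/-- states: counting phase, branch phase, home states -/
abbrev Sta (m N : ℕ) := (Fin m → Fin (BB m N + 2)) ⊕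
  ((Idx m N × Option (Fin m) × (Fin m → Fin (BB m N + 2))) ⊕ Idx m N)

open Classical in
/-- one step inside a branch -/
noncomputable def go (I : Idx m N) (t : Option (Fin m)) (v : Fin m → ℕ) (c : Fin m) : Sta m N :=
  if v + Pi.single c 1 = target N I t then .inr (.inr I)
  else .inr (.inl (I, t, sat _ (v + Pi.single c 1)))

/-- the branching condition -/
def Br (v : Fin m → ℕ) (c : Fin m) (I : Idx m N) : Prop :=
  ∃ a, a ≠ c ∧ v = code N I • Pi.single a 1

open Classical in
/-- transition function -/
noncomputable def stp : Sta m N → Fin m → Sta m N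
  | .inl v, c => if h : ∃ I, Br N (unb v) c I then go N h.choose none (unb v) c
      else .inl (sat _ (unb v + Pi.single c 1))
  | .inr (.inl (I, t, v)), c => go N I t (unb v) c
  | .inr (.inr I), c => go N I (some c) 0 c

/-- the automaton -/
noncomputable def aut (Z : Set (Fin m → ℕ)) : DFA (Fin m) (Sta m N) where
  step := stp N
  start := .inl (sat _ 0)
  accept := {s | (∃ v, s = .inl v ∧ unb v ∈ Z ∧ ∀ i, unb v i ≤ BB m N) ∨
    ∃ I : Idx m N, s = .inr (.inr I) ∧ ∀ k : Fin m → ℕ, qq N I + ∑ a, k a • unb (I.2.1 a) ∈ Z}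

/-- soundness invariant -/
def Inv (x : Fin m → ℕ) : Sta m N → Prop
  | .inl v => v = sat _ x
  | .inr (.inl (_, none, v)) => v = sat _ x
  | .inr (.inl (I, some _, v)) => ∃ (k : Fin m → ℕ) (y : Fin m → ℕ),
      x = qq N I + ∑ a, k a • unb (I.2.1 a) + y ∧ v = sat _ y
  | .inr (.inr I) => ∃ k : Fin m → ℕ, x = qq N I + ∑ a, k a • unb (I.2.1 a)

lemma unb_le {B : ℕ} (v : Fin m → Fin (B + 1)) (i : Fin m) : unb v i ≤ B :=
  Nat.le_of_lt_succ (v i).2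

lemma qq_le (I : Idx m N) (i : Fin m) : qq N I i ≤ BB m N := by
  have hm : 1 ≤ m := Nat.succ_le_of_lt (Nat.lt_of_le_of_lt (Nat.zero_le _) i.2)
  simp only [qq, BB, Pi.add_apply, Pi.smul_apply, smul_eq_mul]
  have h1 := unb_le I.1 i
  have h2 := unb_le (I.2.1 I.2.2) i
  have h3 : (K0 m N + 2) * unb (I.2.1 I.2.2) i ≤ (K0 m N + 2) * N := Nat.mul_le_mul_left _ h2
  have h4 : 1 * ((K0 m N + 2) * N) ≤ m * ((K0 m N + 2) * N) := Nat.mul_le_mul_right _ hm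
  omega

lemma target_le (I : Idx m N) (t : Option (Fin m)) (i : Fin m) : target N I t i ≤ BB m N := by
  cases t with
  | none => exact qq_le N I i
  | some c => exact (unb_le _ i).trans (Nat.le_add_right _ _)

lemma unb_sat_add_eq {I : Idx m N} {t : Option (Fin m)} {x w : Fin m → ℕ} :
    unb (sat (BB m N) x) + w = target N I t ↔ x + w = target N I t := by
  rw [← sat_eq_iff (v := x + w) (target_le N I t), ← sat_step, sat_eq_iff (target_le N I t)]

lemma go_sat (I : Idx m N) (t : Option (Fin m)) (x : Fin m → ℕ) (c : Fin m) :
    go N I t (unb (sat (BB m N) x)) c = go N I t x c := by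
  simp only [go, unb_sat_add_eq, sat_step]

lemma inv_go_none (I : Idx m N) (x : Fin m → ℕ) (c : Fin m) :
    Inv N (x + Pi.single c 1) (go N I none x c) := by
  unfold go
  split_ifs with h
  · exact ⟨0, by simpa [target] using h⟩
  · exact rfl

lemma inv_go_some (I : Idx m N) (d : Fin m) (k y : Fin m → ℕ) (c : Fin m) :
    Inv N (qq N I + ∑ a, k a • unb (I.2.1 a) + y + Pi.single c 1) (go N I (some d) y c) := by
  unfold go
  split_ifs with h
  · refine ⟨k + Pi.single d 1, ?_⟩
    simp only [target] at h
    rw [add_assoc, h]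
    simp only [Pi.add_apply, add_smul, Finset.sum_add_distrib]
    rw [← add_assoc]
    congr 1
    rw [Finset.sum_eq_single d]
    · simp
    · intro b _ hb; rw [Pi.single_eq_of_ne hb, zero_smul]
    · simp
  · exact ⟨k, y + Pi.single c 1, by rw [add_assoc], rfl⟩

lemma inv_step (x : Fin m → ℕ) (s : Sta m N) (c : Fin m) (h : Inv N x s) :
    Inv N (x + Pi.single c 1) (stp N s c) := by
  match s, h with
  | .inl v, h =>
    obtain rfl : v = sat _ x := h
    simp only [stp]
    split_ifs with hb
    · rw [go_sat]; exact inv_go_none N _ _ _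
    · rw [sat_step]; exact rfl
  | .inr (.inl (I, none, v)), h =>
    obtain rfl : v = sat _ x := h
    simp only [stp]
    rw [go_sat]; exact inv_go_none N _ _ _
  | .inr (.inl (I, some d, v)), h =>
    obtain ⟨k, y, rfl, rfl⟩ := h
    simp only [stp]
    rw [go_sat]; exact inv_go_some N _ _ _ _ _
  | .inr (.inr I), h =>
    obtain ⟨k, rfl⟩ := h
    have := inv_go_some N I c k 0 c
    simpa [stp] using this

lemma inv_eval (Z : Set (Fin m → ℕ)) (w : List (Fin m)) :
    Inv N (parikh w) ((aut N Z).eval w) := by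
  induction w using List.reverseRecOn with
  | nil => rw [parikh_nil]; exact rfl
  | append_singleton w c ih =>
    rw [DFA.eval_append_singleton, parikh_append, parikh_cons, parikh_nil, add_zero]
    exact inv_step N _ _ _ ih

lemma sound (Z : Set (Fin m → ℕ)) (w : List (Fin m)) (hw : w ∈ (aut N Z).accepts) :
    parikh w ∈ Z := by
  have hi := inv_eval N Z w
  rcases hw with ⟨v, hv, hZ, hB⟩ | ⟨I, hI, hZ⟩
  · change (aut N Z).eval w = _ at hv
    rw [hv] at hi
    obtain rfl : v = sat _ (parikh w) := hi
    rw [(sat_eq_iff hB).1 rfl]; exact hZ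
  · change (aut N Z).eval w = _ at hI
    rw [hI] at hi
    obtain ⟨k, hk⟩ := hi
    rw [hk]; exact hZ k

lemma eval_br (Z : Set (Fin m → ℕ)) (I : Idx m N) (t : Option (Fin m)) (u : List (Fin m)) :
    ∀ y : Fin m → ℕ, u ≠ [] → y + parikh u = target N I t →
      (aut N Z).evalFrom (.inr (.inl (I, t, sat _ y))) u = .inr (.inr I) := by
  induction u with
  | nil => intro y h; exact absurd rfl h
  | cons c u ih =>
    intro y _ h
    rw [DFA.evalFrom_cons]
    change (aut N Z).evalFrom (go N I t (unb (sat _ y)) c) u = _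
    rw [go_sat]
    rw [parikh_cons, ← add_assoc] at h
    unfold go
    by_cases hu : u = []
    · subst hu
      rw [parikh_nil, add_zero] at h
      rw [if_pos h]; rfl
    · rw [if_neg]
      · exact ih _ hu h
      · intro h'
        rw [h'] at h
        have h0 : parikh u = 0 := by simpa using h
        obtain ⟨d, u', rfl⟩ := List.exists_cons_of_ne_nil hu
        have := congrFun h0 d
        simp [parikh_cons] at this

lemma eval_home (Z : Set (Fin m → ℕ)) (I : Idx m N) (c : Fin m) (hc : 0 < unb (I.2.1 c) c) :
    ∃ u, parikh u = unb (I.2.1 c) ∧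
      (aut N Z).evalFrom (.inr (.inr I)) u = .inr (.inr I) := by
  obtain ⟨u, hu⟩ := parikh_surj (unb (I.2.1 c) - Pi.single c 1)
  have hp : parikh (c :: u) = unb (I.2.1 c) := by
    rw [parikh_cons, hu]
    funext i
    by_cases h : i = c
    · subst h; simp; omega
    · simp [Pi.single_eq_of_ne h]
  refine ⟨c :: u, hp, ?_⟩
  have := eval_br N Z I (some c) (c :: u) 0 (by simp) (by rw [zero_add, hp]; rfl)
  rw [DFA.evalFrom_cons] at this ⊢
  change (aut N Z).evalFrom (go N I (some c) (unb (sat _ 0)) c) u = _ at this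
  rw [go_sat] at this
  exact this

lemma eval_loops (Z : Set (Fin m → ℕ)) (I : Idx m N)
    (hI : ∀ a, unb (I.2.1 a) = 0 ∨ 0 < unb (I.2.1 a) a) (k : Fin m → ℕ) :
    ∃ u, parikh u = ∑ a, k a • unb (I.2.1 a) ∧
      (aut N Z).evalFrom (.inr (.inr I)) u = .inr (.inr I) := by
  let G : AddSubmonoid (Fin m → ℕ) :=
    { carrier := {x | ∃ u, parikh u = x ∧
        (aut N Z).evalFrom (.inr (.inr I)) u = .inr (.inr I)}
      zero_mem' := ⟨[], parikh_nil, rfl⟩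
      add_mem' := by
        rintro x y ⟨u, rfl, hu⟩ ⟨w, rfl, hw⟩
        exact ⟨u ++ w, parikh_append _ _, by rw [DFA.evalFrom_of_append, hu, hw]⟩ }
  have : ∑ a, k a • unb (I.2.1 a) ∈ G := by
    refine sum_mem (fun a _ => nsmul_mem ?_ _)
    rcases hI a with h | h
    · rw [h]; exact zero_mem _
    · exact eval_home N Z I a h
  exact this

lemma eval_main (Z : Set (Fin m → ℕ)) (u : List (Fin m)) :
    ∀ y : Fin m → ℕ, (∀ i, (y + parikh u) i ≤ BB m N) →
      (∃ a b, a ≠ b ∧ 0 < y a ∧ 0 < y b) →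
      (aut N Z).evalFrom (.inl (sat _ y)) u = .inl (sat _ (y + parikh u)) := by
  induction u with
  | nil => intro y _ _; rw [parikh_nil, add_zero]; rfl
  | cons c u ih =>
    intro y hB ⟨a, b, hab, ha, hb⟩
    rw [DFA.evalFrom_cons]
    change (aut N Z).evalFrom (stp N (.inl (sat _ y)) c) u = _
    simp only [stp]
    rw [parikh_cons, ← add_assoc] at hB ⊢
    rw [dif_neg, sat_step]
    · exact ih _ hB ⟨a, b, hab, Nat.add_pos_left ha _, Nat.add_pos_left hb _⟩
    · rintro ⟨I, d, hd, he⟩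
      have hy : unb (sat (BB m N) y) = y := by
        rw [sat_eq_iff]
        intro i
        have := hB i
        simp only [Pi.add_apply] at this
        omega
      rw [hy] at he
      rw [he] at ha hb
      have h1 : a = d := by
        by_contra h; simp [Pi.single_eq_of_ne h] at ha
      have h2 : b = d := by
        by_contra h; simp [Pi.single_eq_of_ne h] at hb
      exact hab (h1.trans h2.symm)

lemma single_smul_inj {i j : ℕ} {a b : Fin m} (hi : 0 < i)
    (h : (i • Pi.single a 1 : Fin m → ℕ) = j • Pi.single b 1) : i = j ∧ a = b := by
  have h1 := congrFun h a
  by_cases hab : a = b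
  · subst hab; simp at h1; exact ⟨h1, rfl⟩
  · simp [Pi.single_eq_of_ne hab] at h1; omega

lemma eval_run (Z : Set (Fin m → ℕ)) (a : Fin m) (n : ℕ) :
    n ≤ BB m N + 1 → (aut N Z).eval (List.replicate n a) = .inl (sat _ (n • Pi.single a 1)) := by
  induction n with
  | zero => intro _; simp [aut]
  | succ n ih =>
    intro hn
    rw [List.replicate_succ', DFA.eval_append_singleton, ih (by omega)]
    change stp N (.inl (sat _ (n • Pi.single a 1))) a = _
    simp only [stp]
    have hu : unb (sat (BB m N) (n • Pi.single a 1)) = n • Pi.single a 1 := by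
      rw [sat_eq_iff]
      intro i
      by_cases h : i = a
      · subst h; simp; omega
      · simp [Pi.single_eq_of_ne h]
    rw [dif_neg, sat_step, succ_nsmul]
    rintro ⟨I, d, hd, he⟩
    rw [hu] at he
    have h2 := two_le_code N I
    exact hd (single_smul_inj (by omega) he.symm).2

lemma exists_rest (v p : Fin m → ℕ) (h : p ≤ v) : ∃ w : List (Fin m), p + parikh w = v := by
  obtain ⟨w, hw⟩ := parikh_surj (v - p)
  exact ⟨w, by rw [hw]; exact add_tsub_cancel_of_le h⟩

lemma le_two (v : Fin m → ℕ) (a b : Fin m) (hab : a ≠ b) (n : ℕ) (ha : n ≤ v a) (hb : 0 < v b) :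
    (n • Pi.single a 1 + Pi.single b 1 : Fin m → ℕ) ≤ v := by
  intro i
  by_cases h1 : i = a
  · subst h1; simp [Pi.single_eq_of_ne hab, ha]
  · by_cases h2 : i = b
    · subst h2; simp [Pi.single_eq_of_ne h1]; omega
    · simp [Pi.single_eq_of_ne h1, Pi.single_eq_of_ne h2]

lemma complete_small (Z : Set (Fin m → ℕ)) (v : Fin m → ℕ) (hv : v ∈ Z)
    (hB : ∀ i, v i ≤ BB m N) (hne : ∃ a b, a ≠ b ∧ 0 < v a ∧ 0 < v b) :
    ∃ w ∈ (aut N Z).accepts, parikh w = v := by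
  obtain ⟨a, b, hab, ha, hb⟩ := hne
  obtain ⟨w, hw⟩ := exists_rest v (1 • Pi.single a 1 + Pi.single b 1)
    (le_two v a b hab 1 ha hb)
  have hp : parikh (List.replicate 1 a ++ b :: w) = v := by
    rw [parikh_append, parikh_cons, parikh_replicate, ← add_assoc, hw]
  refine ⟨List.replicate 1 a ++ b :: w, ?_, hp⟩
  have hu : unb (sat (BB m N) (1 • Pi.single a 1)) = 1 • Pi.single a 1 := by
    rw [sat_eq_iff]
    intro i
    by_cases h : i = a
    · subst h; simp; have := hB i; omega
    · simp [Pi.single_eq_of_ne h]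
  have he : (aut N Z).eval (List.replicate 1 a ++ b :: w) = .inl (sat _ v) := by
    rw [DFA.eval, DFA.evalFrom_of_append, DFA.evalFrom_cons]
    change (aut N Z).evalFrom (stp N ((aut N Z).eval (List.replicate 1 a)) b) w = _
    rw [eval_run N Z a 1 (by omega)]
    simp only [stp]
    rw [dif_neg, sat_step, eval_main, hw]
    · rw [hw]; exact hB
    · exact ⟨a, b, hab, by simp, by simp⟩
    · rintro ⟨I, d, hd, he⟩
      rw [hu] at he
      have h2 := two_le_code N I
      have := (single_smul_inj (by omega) he).1
      omega
  left
  refine ⟨sat _ v, he, ?_, ?_⟩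
  · rw [(sat_eq_iff hB).2 rfl]; exact hv
  · rw [(sat_eq_iff hB).2 rfl]; exact hB

lemma complete_big (Z : Set (Fin m → ℕ)) (I : Idx m N)
    (hI : ∀ a, unb (I.2.1 a) = 0 ∨ 0 < unb (I.2.1 a) a)
    (hZ : ∀ k : Fin m → ℕ, qq N I + ∑ a, k a • unb (I.2.1 a) ∈ Z)
    (hpos : 0 < unb (I.2.1 I.2.2) I.2.2)
    (hne : ∃ a b, a ≠ b ∧ 0 < qq N I a ∧ 0 < qq N I b) (k : Fin m → ℕ) :
    ∃ w ∈ (aut N Z).accepts, parikh w = qq N I + ∑ a, k a • unb (I.2.1 a) := by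
  set a := I.2.2 with ha
  have hqa : K0 m N + 2 ≤ qq N I a := by
    simp only [qq, Pi.add_apply, Pi.smul_apply, smul_eq_mul]
    rw [← ha]
    nlinarith
  obtain ⟨b, hab, hb⟩ : ∃ b, a ≠ b ∧ 0 < qq N I b := by
    obtain ⟨x, y, hxy, hx, hy⟩ := hne
    by_cases h : a = x
    · exact ⟨y, by rw [h]; exact hxy, hy⟩
    · exact ⟨x, h, hx⟩
  have hlt := code_lt N I
  have h2 := two_le_code N I
  obtain ⟨w, hw⟩ := exists_rest (qq N I) (code N I • Pi.single a 1 + Pi.single b 1)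
    (le_two _ a b hab _ (by omega) hb)
  have hB := qq_le N I a
  have hwne : w ≠ [] := by
    rintro rfl
    have := congrFun hw a
    simp [parikh_nil, Pi.single_eq_of_ne hab] at this
    omega
  obtain ⟨u, hup, hue⟩ := eval_loops N Z I hI k
  refine ⟨List.replicate (code N I) a ++ b :: w ++ u, ?_, ?_⟩
  swap
  · rw [parikh_append, parikh_append, parikh_cons, parikh_replicate, ← add_assoc, hw, hup]
  have hu : unb (sat (BB m N) (code N I • Pi.single a 1)) = code N I • Pi.single a 1 := by
    rw [sat_eq_iff]
    intro i
    by_cases h : i = a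
    · rw [h]; simp; omega
    · simp [Pi.single_eq_of_ne h]
  have he : (aut N Z).eval (List.replicate (code N I) a ++ b :: w ++ u) = .inr (.inr I) := by
    rw [DFA.eval, DFA.evalFrom_of_append, DFA.evalFrom_of_append, DFA.evalFrom_cons]
    change (aut N Z).evalFrom ((aut N Z).evalFrom
      (stp N ((aut N Z).eval (List.replicate (code N I) a)) b) w) u = _
    rw [eval_run N Z a _ (by omega)]
    simp only [stp]
    have hex : ∃ J, Br N (unb (sat (BB m N) (code N I • Pi.single a 1))) b J :=
      ⟨I, a, hab, hu⟩
    rw [dif_pos hex]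
    have hch : hex.choose = I := by
      obtain ⟨d, hd, he⟩ := hex.choose_spec
      exact (code_inj N (single_smul_inj (by omega) (hu.symm.trans he)).1).symm
    rw [hch, go_sat]
    unfold go
    rw [if_neg, eval_br N Z I none w _ hwne hw, hue]
    intro h'
    have := congrFun h' a
    simp [target, Pi.single_eq_of_ne hab] at this
    omega
  right
  exact ⟨I, he, hZ⟩

theorem automaton (Z : Set (Fin m → ℕ)) (hG : Good Z N)
    (hne : ∀ v ∈ Z, ∃ a b, a ≠ b ∧ 0 < v a ∧ 0 < v b) :
    parikhImage (aut N Z).accepts = Z := by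
  classical
  apply Set.Subset.antisymm
  · rintro _ ⟨w, hw, rfl⟩
    exact sound N Z w hw
  · intro z hz
    obtain ⟨o, Q, k, ho, hQ, hQ0, hzk, hall⟩ := hG z hz
    by_cases hbig : ∃ j, Q j ≠ 0 ∧ K0 m N + 2 ≤ k j
    · obtain ⟨j, hj, hkj⟩ := hbig
      let I : Idx m N := (fun a => ⟨o a, Nat.lt_succ_of_le (ho a)⟩,
        fun a b => ⟨Q a b, Nat.lt_succ_of_le (hQ a b)⟩, j)
      have hIQ : ∀ a, unb (I.2.1 a) = Q a := fun a => rfl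
      have hIo : unb I.1 = o := rfl
      have hqq : ∀ k' : Fin m → ℕ, qq N I + ∑ a, k' a • unb (I.2.1 a) =
          o + ∑ a, (k' + Pi.single j (K0 m N + 2) : Fin m → ℕ) a • Q a := by
        intro k'
        have e : ∑ x, (Pi.single j (K0 m N + 2) : Fin m → ℕ) x • Q x = (K0 m N + 2) • Q j := by
          rw [Finset.sum_eq_single j]
          · rw [Pi.single_eq_same]
          · intro b _ hb; rw [Pi.single_eq_of_ne hb, zero_smul]
          · simp
        simp only [Pi.add_apply, add_smul _ _ (Q _), Finset.sum_add_distrib]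
        rw [e]
        change o + (K0 m N + 2) • Q j + ∑ a, k' a • Q a = _
        rw [add_assoc, add_comm ((K0 m N + 2) • Q j)]
      have hZ : ∀ k' : Fin m → ℕ, qq N I + ∑ a, k' a • unb (I.2.1 a) ∈ Z := by
        intro k'; rw [hqq]; exact hall _
      obtain ⟨w, hw, hp⟩ := complete_big N Z I (fun a => by rw [hIQ]; exact hQ0 a) hZ
        ((hQ0 j).resolve_left hj) (hne _ (by simpa using hZ 0)) (k - Pi.single j (K0 m N + 2))
      refine ⟨w, hw, ?_⟩
      rw [hp, hqq, hzk]
      congr 3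
      apply funext
      intro a
      congr 1
      by_cases h : a = j
      · subst h; simp; omega
      · simp [Pi.single_eq_of_ne h]
    · push Not at hbig
      obtain ⟨w, hw, hp⟩ := complete_small N Z z hz (by
        intro i
        rw [hzk, Pi.add_apply, Finset.sum_apply, BB]
        refine Nat.add_le_add (ho i) ?_
        calc ∑ a, (k a • Q a) i ≤ ∑ a : Fin m, (K0 m N + 2) * N := by
              refine Finset.sum_le_sum (fun a _ => ?_)
              by_cases h : Q a = 0
              · simp [h]
              · exact Nat.mul_le_mul (hbig a h).le (hQ a i)
          _ = m * ((K0 m N + 2) * N) := by simp) (hne z hz)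
      exact ⟨w, hw, hp⟩

lemma card_Sta : Fintype.card (Sta m N) =
    (BB m N + 2) ^ m + (K0 m N * ((m + 1) * (BB m N + 2) ^ m) + K0 m N) := by
  have h := card_Idx (m := m) N
  rw [Fintype.card_sum, Fintype.card_sum, h, Fintype.card_prod (Idx m N), h]
  simp

end Auto
end PK
namespace PK
section Gram
variable {m : ℕ} (G : ContextFreeGrammar (Fin m))

/-- terminal productions -/
def GT (A : G.NT) (a : Fin m) : Prop :=
  ∃ r ∈ G.rules, r.input = A ∧ r.output = [Symbol.terminal a]

/-- binary productions -/
def GR (A B C : G.NT) : Prop :=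
  ∃ r ∈ G.rules, r.input = A ∧ r.output = [Symbol.nonterminal B, Symbol.nonterminal C]

variable [DecidableEq G.NT]

/-- vectors generated by a symbol -/
def SD : Symbol (Fin m) G.NT → (Fin m → ℕ) → Prop
  | .terminal a, v => v = Pi.single a 1
  | .nonterminal A, v => ∃ U, D (GT G) (GR G) A U v

/-- vectors generated by a sentential form -/
def LD : List (Symbol (Fin m) G.NT) → (Fin m → ℕ) → Prop
  | [], v => v = 0
  | x :: s, v => ∃ v1 v2, SD G x v1 ∧ LD s v2 ∧ v = v1 + v2

lemma LD_append (s t : List (Symbol (Fin m) G.NT)) (v : Fin m → ℕ) :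
    LD G (s ++ t) v ↔ ∃ v1 v2, LD G s v1 ∧ LD G t v2 ∧ v = v1 + v2 := by
  induction s generalizing v with
  | nil => simp [LD]
  | cons x s ih =>
    simp only [List.cons_append, LD, ih]
    constructor
    · rintro ⟨a, _, ha, ⟨b, c, hb, hc, rfl⟩, rfl⟩
      exact ⟨a + b, c, ⟨a, b, ha, hb, rfl⟩, hc, (add_assoc _ _ _).symm⟩
    · rintro ⟨_, c, ⟨a, b, ha, hb, rfl⟩, hc, rfl⟩
      exact ⟨a, b + c, ha, ⟨b, c, hb, hc, rfl⟩, add_assoc _ _ _⟩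

lemma LD_word (w : List (Fin m)) : LD G (w.map Symbol.terminal) (parikh w) := by
  induction w with
  | nil => simp [LD, parikh_nil]
  | cons a w ih =>
    refine ⟨Pi.single a 1, parikh w, rfl, ih, ?_⟩
    funext i
    simp only [parikh, List.count_cons, Pi.add_apply, Pi.single_apply]
    by_cases h : i = a
    · subst h; simp [add_comm]
    · simp [h, Ne.symm h]

lemma LD_rule (hG : IsCNF G) (he : ∀ r ∈ G.rules, r.output ≠ [])
    {r : ContextFreeRule (Fin m) G.NT} (hr : r ∈ G.rules) {v : Fin m → ℕ}
    (h : LD G r.output v) : LD G [Symbol.nonterminal r.input] v := by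
  rcases hG r hr with ⟨a, ha⟩ | ⟨B, C, -, -, hBC⟩ | ⟨-, h0⟩
  · rw [ha] at h
    obtain ⟨v1, v2, h1, h2, rfl⟩ := h
    exact ⟨v1, v2, ⟨_, by rw [show v1 = Pi.single a 1 from h1]; exact D.leaf ⟨r, hr, rfl, ha⟩⟩, h2, rfl⟩
  · rw [hBC] at h
    obtain ⟨v1, _, ⟨U1, h1⟩, ⟨v2, v3, ⟨U2, h2⟩, h3, rfl⟩, rfl⟩ := h
    exact ⟨v1 + v2, v3, ⟨_, D.node ⟨r, hr, rfl, hBC⟩ h1 h2⟩, h3, (add_assoc _ _ _).symm⟩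
  · exact absurd h0 (he r hr)

lemma LD_produces (hG : IsCNF G) (he : ∀ r ∈ G.rules, r.output ≠ [])
    {s t : List (Symbol (Fin m) G.NT)} (hst : G.Produces s t) {v : Fin m → ℕ}
    (h : LD G t v) : LD G s v := by
  obtain ⟨r, hr, hrw⟩ := hst
  obtain ⟨p, q, rfl, rfl⟩ := hrw.exists_parts
  rw [LD_append] at h ⊢
  obtain ⟨_, c, h1, hc, rfl⟩ := h
  rw [LD_append] at h1
  obtain ⟨a, b, ha, hb, rfl⟩ := h1
  exact ⟨_, _, (LD_append G _ _ _).2 ⟨a, b, ha, LD_rule G hG he hr hb, rfl⟩, hc, rfl⟩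

lemma LD_derives (hG : IsCNF G) (he : ∀ r ∈ G.rules, r.output ≠ [])
    {s t : List (Symbol (Fin m) G.NT)} (hst : G.Derives s t) {v : Fin m → ℕ}
    (h : LD G t v) : LD G s v := by
  induction hst using Relation.ReflTransGen.head_induction_on with
  | refl => exact h
  | head h1 _ ih => exact LD_produces G hG he h1 ih

lemma D_word {A : G.NT} {U : Finset G.NT} {v : Fin m → ℕ} (h : D (GT G) (GR G) A U v) :
    ∃ w, parikh w = v ∧ G.Derives [Symbol.nonterminal A] (w.map Symbol.terminal) := by
  induction h with
  | @leaf A a h =>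
    obtain ⟨r, hr, rfl, ho⟩ := h
    refine ⟨[a], ?_, ContextFreeGrammar.Produces.single ⟨r, hr, ?_⟩⟩
    · funext i
      simp only [parikh, Pi.single_apply, List.count_singleton]
      by_cases h : i = a
      · simp [h]
      · simp [h, Ne.symm h]
    · have := ContextFreeRule.Rewrites.input_output (r := r)
      simpa [ho] using this
  | @node A B C U1 U2 v1 v2 h _ _ ih1 ih2 =>
    obtain ⟨r, hr, rfl, ho⟩ := h
    obtain ⟨w1, rfl, d1⟩ := ih1
    obtain ⟨w2, rfl, d2⟩ := ih2
    refine ⟨w1 ++ w2, parikh_append _ _, ?_⟩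
    have h0 : G.Derives [Symbol.nonterminal r.input] ([Symbol.nonterminal B] ++ [Symbol.nonterminal C]) :=
      ContextFreeGrammar.Produces.single ⟨r, hr, by
        have := ContextFreeRule.Rewrites.input_output (r := r)
        rwa [ho] at this⟩
    rw [List.map_append]
    exact h0.trans ((d1.append_right _).trans (d2.append_left _))

lemma image_eq (hG : IsCNF G) (he : ∀ r ∈ G.rules, r.output ≠ []) :
    parikhImage G.language = {v | ∃ U, D (GT G) (GR G) G.initial U v} := by
  ext v
  constructor
  · rintro ⟨w, hw, rfl⟩
    obtain ⟨v1, v2, h1, h2, h3⟩ := LD_derives G hG he ((G.mem_language_iff w).1 hw) (LD_word G w)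
    have h2' : v2 = 0 := h2
    rw [h2', add_zero] at h3
    rw [h3]
    exact h1
  · rintro ⟨U, h⟩
    obtain ⟨w, rfl, hd⟩ := D_word G h
    exact ⟨w, (G.mem_language_iff w).2 hd, rfl⟩

/-- bound for trees and pumps -/
def N1 (h : ℕ) : ℕ := 4 * h * ((h + 1) * 2 ^ h)

lemma good_image [Fintype G.NT] (hG : IsCNF G) (he : ∀ r ∈ G.rules, r.output ≠ [])
    (hh : 1 ≤ Fintype.card G.NT) :
    Good (parikhImage G.language) (NB m (N1 (Fintype.card G.NT))) := by
  rw [image_eq G hG he]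
  apply good_of_closure
  rintro z ⟨U, hz⟩
  obtain ⟨v0, q, h0, hs, hq, rfl⟩ := D.final (N := N1 (Fintype.card G.NT))
    (by unfold N1; nlinarith [Nat.one_le_two_pow (n := Fintype.card G.NT), Nat.mul_le_mul hh (le_refl (2 ^ Fintype.card G.NT)), Nat.mul_le_mul hh (Nat.zero_le (Fintype.card G.NT * 2 ^ Fintype.card G.NT))])
    rfl le_rfl hz
  exact ⟨v0, q, Pumps (GT G) (GR G) (N1 (Fintype.card G.NT)) U, fun a => (le_sz _ a).trans hs,
    fun p ⟨_, _, _, _, _, hp⟩ a => (le_sz _ a).trans hp, hq, rfl,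
    fun q' hq' => ⟨U, h0.pumps hq'⟩⟩

end Gram

section Bounds

/-- at most exponential growth -/
def Ex (f : ℕ → ℕ) : Prop := ∃ C, ∀ h, 1 ≤ h → f h ≤ 2 ^ (C * h)

lemma Ex.mul {f g : ℕ → ℕ} (hf : Ex f) (hg : Ex g) : Ex (fun h => f h * g h) := by
  obtain ⟨C, hC⟩ := hf
  obtain ⟨E, hE⟩ := hg
  refine ⟨C + E, fun h hh => ?_⟩
  rw [add_mul, pow_add]
  exact Nat.mul_le_mul (hC h hh) (hE h hh)

lemma Ex.const (c : ℕ) : Ex (fun _ => c) :=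
  ⟨c, fun h hh => (Nat.lt_two_pow_self (n := c)).le.trans
    (Nat.pow_le_pow_right (by norm_num) (Nat.le_mul_of_pos_right _ hh))⟩

lemma Ex.add {f g : ℕ → ℕ} (hf : Ex f) (hg : Ex g) : Ex (fun h => f h + g h) := by
  obtain ⟨C, hC⟩ := hf
  obtain ⟨E, hE⟩ := hg
  refine ⟨C + E + 1, fun h hh => ?_⟩
  have h1 := hC h hh
  have h2 := hE h hh
  have h3 : 2 ^ (C * h) ≤ 2 ^ ((C + E) * h) :=
    Nat.pow_le_pow_right (by norm_num) (Nat.mul_le_mul_right _ (by omega))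
  have h4 : 2 ^ (E * h) ≤ 2 ^ ((C + E) * h) :=
    Nat.pow_le_pow_right (by norm_num) (Nat.mul_le_mul_right _ (by omega))
  have h5 : 2 ^ ((C + E) * h + 1) ≤ 2 ^ ((C + E + 1) * h) :=
    Nat.pow_le_pow_right (by norm_num) (by nlinarith)
  rw [pow_succ] at h5
  change f h + g h ≤ _
  omega

lemma Ex.pow {f : ℕ → ℕ} (hf : Ex f) (n : ℕ) : Ex (fun h => f h ^ n) := by
  induction n with
  | zero => simpa using Ex.const 1
  | succ n ih => simpa only [pow_succ] using ih.mul hf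

lemma Ex.self : Ex (fun h => h) :=
  ⟨1, fun h _ => by rw [one_mul]; exact (Nat.lt_two_pow_self (n := h)).le⟩

lemma Ex.two : Ex (fun h => 2 ^ h) := ⟨1, fun h _ => by rw [one_mul]⟩

lemma Ex.N1 : Ex PK.N1 :=
  ((Ex.const 4).mul Ex.self).mul ((Ex.self.add (Ex.const 1)).mul Ex.two)

lemma Ex.NB (m : ℕ) {f : ℕ → ℕ} (hf : Ex f) : Ex (fun h => PK.NB m (f h)) :=
  hf.add (((hf.add (Ex.const 1)).pow m).mul
    (((((Ex.const (m + 1)).mul hf).add (Ex.const 1)).pow m).mul hf))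

lemma Ex.K0 (m : ℕ) {f : ℕ → ℕ} (hf : Ex f) : Ex (fun h => PK.K0 m (f h)) :=
  ((hf.add (Ex.const 1)).pow m).mul ((((hf.add (Ex.const 1)).pow m).pow m).mul (Ex.const m))

lemma Ex.BB (m : ℕ) {f : ℕ → ℕ} (hf : Ex f) : Ex (fun h => PK.BB m (f h)) :=
  hf.add ((Ex.const m).mul (((Ex.K0 m hf).add (Ex.const 2)).mul hf))

lemma Ex.card (m : ℕ) {f : ℕ → ℕ} (hf : Ex f) :
    Ex (fun h => Fintype.card (Sta m (f h))) := by
  simp only [card_Sta]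
  have hB := ((Ex.BB m hf).add (Ex.const 2)).pow m
  exact hB.add (((Ex.K0 m hf).mul ((Ex.const (m + 1)).mul hB)).add (Ex.K0 m hf))

end Bounds
end PK

/-- For every `m ≥ 1` there is a constant `C > 0` such that every CFG in
Chomsky normal form with `h ≥ 1` variables over a terminal alphabet of `m` letters
generating no unary word admits a Parikh equivalent DFA with at most `2^{C·h}` states. -/
theorem cnf_to_parikh_equivalent_dfa_nonunary (m : ℕ) (hm : 1 ≤ m) :
    ∃ C : ℕ, 0 < C ∧
      ∀ h : ℕ, 1 ≤ h →
      ∀ G : ContextFreeGrammar (Fin m), IsCNF G →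
      ∀ fG : Fintype G.NT, @Fintype.card G.NT fG = h →
      (∀ w ∈ G.language, ¬ IsUnaryWord w) →
      ∃ (σ : Type) (_ : Fintype σ) (B : DFA (Fin m) σ),
        Fintype.card σ ≤ 2 ^ (C * h) ∧
        parikhImage B.accepts = parikhImage G.language := by
  obtain ⟨C, hC⟩ := PK.Ex.card m (PK.Ex.NB m PK.Ex.N1)
  refine ⟨C + 1, Nat.succ_pos _, ?_⟩
  intro h hh G hG fG hcard hun
  classical
  have he : ∀ r ∈ G.rules, r.output ≠ [] := by
    intro r hr h0
    rcases hG r hr with ⟨a, ha⟩ | ⟨B, D, -, -, hBD⟩ | ⟨hi, -⟩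
    · rw [h0] at ha
      exact absurd ha (by simp)
    · rw [h0] at hBD
      exact absurd hBD (by simp)
    · have hmem : ([] : List (Fin m)) ∈ G.language := by
        rw [G.mem_language_iff]
        refine ContextFreeGrammar.Produces.single ⟨r, hr, ?_⟩
        have := ContextFreeRule.Rewrites.input_output (r := r)
        rw [h0, hi] at this
        exact this
      exact hun _ hmem (by intro c hc; simp at hc)
  subst hcard
  refine ⟨PK.Sta m (PK.NB m (PK.N1 (Fintype.card G.NT))), inferInstance,
    PK.aut _ (parikhImage G.language), ?_, ?_⟩
  · exact (hC _ hh).trans (Nat.pow_le_pow_right (by norm_num)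
      (Nat.mul_le_mul_right _ (Nat.le_succ _)))
  · apply PK.automaton _ _ (PK.good_image G hG he hh)
    rintro v ⟨w, hw, rfl⟩
    have hn := hun w hw
    unfold IsUnaryWord at hn
    push Not at hn
    obtain ⟨a, ha, b, hb, hab⟩ := hn
    exact ⟨a, b, hab, List.count_pos_iff.2 ha, List.count_pos_iff.2 hb⟩
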